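/- arXiv:math-ph/0606035 — 2 statements merged into one kernel-verified Lean document; each statement's English description precedes it below -/
import Mathlib

section
/- Let n ≥ 1. For every Schwartz function f on ℝⁿ: (i) Σ_{k∈ℤⁿ} 𝓕f(√(2π)·k) = Σ_{k∈ℤⁿ} f(√(2π)·k); (ii) for every symmetric integer n×n matrix B with even diagonal, Σ_{k∈ℤⁿ} e^{πi⟨kB,k⟩} f(√(2π)·k) = Σ_{k∈ℤⁿ} f(√(2π)·k); (iii) for every A ∈ GL(n,ℤ), Σ_{k∈ℤⁿ} f(√(2π)·kA) = Σ_{k∈ℤⁿ} f(√(2π)·k). That is, the Dirac comb Δ = Σ_{k∈ℤⁿ} δ_{√(2π)k} is fixed by the Weil-representation operators attached to the generators of Γ_{1,2}. -/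
noncomputable section

open scoped BigOperators Real

/-- The inclusion `ℤⁿ ⊆ ℝⁿ`. -/
def ZtoR {n : ℕ} (k : Fin n → ℤ) : Fin n → ℝ := fun j => (k j : ℝ)

/-- The Fourier transform `𝓕f(y) = (2π)^{−n/2} ∫_{ℝⁿ} f(x) e^{i⟨x,y⟩} dx`. -/
def Fhat (n : ℕ) (f : SchwartzMap (Fin n → ℝ) ℂ) (y : Fin n → ℝ) : ℂ :=
  (((2 * π) ^ (-(n : ℝ) / 2) : ℝ) : ℂ) *
    ∫ x : Fin n → ℝ, f x * Complex.exp (Complex.I * ((∑ j, x j * y j : ℝ) : ℂ))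

open MeasureTheory Set UnitAddTorus
open scoped FourierTransform

section LatticeSums

variable {n : ℕ}

lemma ZtoR_add (k l : Fin n → ℤ) : ZtoR (k + l) = ZtoR k + ZtoR l := by
  ext j; simp [ZtoR]

lemma ZtoR_injective : Function.Injective (ZtoR (n := n)) := fun k l h => by
  ext j; simpa [ZtoR] using congrFun h j

lemma summable_inv_one_add_norm_ZtoR_pow :
    Summable fun k : Fin n → ℤ => ((1 + ‖ZtoR k‖) ^ (n + 1))⁻¹ := by
  let L := Submodule.span ℤ (Set.range (Pi.basisFun ℝ (Fin n)))
  have hL : ∀ k : Fin n → ℤ, ZtoR k ∈ L := fun k => by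
    rw [Module.Basis.mem_span_iff_repr_mem]
    simp [ZtoR]
  have hrank : Module.finrank ℤ L < n + 1 := by
    rw [ZLattice.rank ℝ]; simp
  have hinj : Function.Injective fun k : Fin n → ℤ => (⟨ZtoR k, hL k⟩ : L) :=
    fun k l h => ZtoR_injective (congrArg Subtype.val h)
  have hsum := (ZLattice.summable_norm_pow_inv L (n + 1) hrank).comp_injective hinj
  refine hsum.of_norm_bounded_eventually ?_
  filter_upwards [(Set.finite_singleton (0 : Fin n → ℤ)).compl_mem_cofinite] with k hk
  have hk0 : ZtoR k ≠ 0 := fun h => hk (ZtoR_injective (h.trans (by ext; simp [ZtoR])))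
  have hpos : 0 < ‖ZtoR k‖ := norm_pos_iff.mpr hk0
  rw [Real.norm_of_nonneg (by positivity)]
  simp only [Function.comp_apply, ← inv_pow, Submodule.coe_norm]
  gcongr
  linarith

lemma SchwartzMap.exists_norm_add_ZtoR_le (g : SchwartzMap (Fin n → ℝ) ℂ) (R : ℝ) :
    ∃ C : ℝ, ∀ x : Fin n → ℝ, ‖x‖ ≤ R → ∀ k : Fin n → ℤ,
      ‖g (x + ZtoR k)‖ ≤ C * ((1 + ‖ZtoR k‖) ^ (n + 1))⁻¹ := by
  obtain ⟨C, hC⟩ : ∃ C : ℝ, ∀ x, (1 + ‖x‖) ^ (n + 1) * ‖g x‖ ≤ C :=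
    ⟨_, fun x => by
      simpa using SchwartzMap.one_add_le_sup_seminorm_apply (𝕜 := ℝ) (m := (n + 1, 0))
        le_rfl le_rfl g x⟩
  refine ⟨(1 + R) ^ (n + 1) * C, fun x hx k => ?_⟩
  have hR : 0 ≤ R := (norm_nonneg x).trans hx
  rw [← div_eq_mul_inv, le_div_iff₀ (by positivity)]
  have hnorm : 1 + ‖ZtoR k‖ ≤ (1 + R) * (1 + ‖x + ZtoR k‖) := by
    have h : ‖ZtoR k‖ ≤ ‖x + ZtoR k‖ + ‖x‖ := by
      simpa using norm_sub_le (x + ZtoR k) x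
    nlinarith [norm_nonneg (x + ZtoR k)]
  calc ‖g (x + ZtoR k)‖ * (1 + ‖ZtoR k‖) ^ (n + 1)
      ≤ ‖g (x + ZtoR k)‖ * ((1 + R) * (1 + ‖x + ZtoR k‖)) ^ (n + 1) := by gcongr
    _ = (1 + R) ^ (n + 1) * ((1 + ‖x + ZtoR k‖) ^ (n + 1) * ‖g (x + ZtoR k)‖) := by
        rw [mul_pow]; ring
    _ ≤ (1 + R) ^ (n + 1) * C := by gcongr; exact hC _

lemma SchwartzMap.summable_ZtoR (g : SchwartzMap (Fin n → ℝ) ℂ) :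
    Summable fun k : Fin n → ℤ => g (ZtoR k) := by
  obtain ⟨C, hC⟩ := g.exists_norm_add_ZtoR_le 0
  refine (summable_inv_one_add_norm_ZtoR_pow.mul_left C).of_norm_bounded fun k => ?_
  simpa using hC 0 (by simp) k

/-- The `ℤⁿ`-periodization `x ↦ ∑ₖ g (x + k)` of a Schwartz function. -/
def SchwartzMap.periodization (g : SchwartzMap (Fin n → ℝ) ℂ) : C(Fin n → ℝ, ℂ) where
  toFun x := ∑' k : Fin n → ℤ, g (x + ZtoR k)
  continuous_toFun := by
    refine continuous_iff_continuousAt.mpr fun x₀ => ?_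
    obtain ⟨C, hC⟩ := g.exists_norm_add_ZtoR_le (‖x₀‖ + 1)
    have hcont : ContinuousOn (fun x => ∑' k : Fin n → ℤ, g (x + ZtoR k))
        (Metric.closedBall 0 (‖x₀‖ + 1)) :=
      continuousOn_tsum (fun k => by fun_prop) (summable_inv_one_add_norm_ZtoR_pow.mul_left C)
        fun k x hx => hC x (by simpa using hx) k
    refine hcont.continuousAt (Filter.mem_of_superset
      (Metric.isOpen_ball.mem_nhds (x := x₀) ?_) Metric.ball_subset_closedBall)
    simp

lemma SchwartzMap.periodization_add_ZtoR (g : SchwartzMap (Fin n → ℝ) ℂ) (x : Fin n → ℝ)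
    (l : Fin n → ℤ) : g.periodization (x + ZtoR l) = g.periodization x := by
  change ∑' k : Fin n → ℤ, g (x + ZtoR l + ZtoR k) = ∑' k : Fin n → ℤ, g (x + ZtoR k)
  rw [← (Equiv.addLeft l).tsum_eq fun k => g (x + ZtoR k)]
  simp [ZtoR_add, add_assoc]

/-- The projection `ℝⁿ → (ℝ/ℤ)ⁿ`. -/
def torusProj (n : ℕ) : C(Fin n → ℝ, UnitAddTorus (Fin n)) where
  toFun x i := (x i : UnitAddCircle)
  continuous_toFun := continuous_pi fun i =>
    (AddCircle.continuous_mk' 1).comp (continuous_apply i)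

lemma isQuotientMap_torusProj (n : ℕ) : Topology.IsQuotientMap (torusProj n) :=
  (IsOpenQuotientMap.piMap (f := fun (_ : Fin n) (x : ℝ) => (x : UnitAddCircle))
    fun _ => QuotientAddGroup.isOpenQuotientMap_mk).isQuotientMap

lemma SchwartzMap.periodization_factorsThrough (g : SchwartzMap (Fin n → ℝ) ℂ) :
    Function.FactorsThrough g.periodization (torusProj n) := by
  intro x y hxy
  have h : ∀ i, ∃ m : ℤ, x i = y i + m := fun i => by
    have hi : (y i : UnitAddCircle) = (x i : UnitAddCircle) := (congrFun hxy i).symm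
    obtain ⟨m, hm⟩ := AddSubgroup.mem_zmultiples_iff.mp (QuotientAddGroup.eq.mp hi)
    exact ⟨m, by simp at hm; linarith⟩
  choose l hl using h
  rw [show x = y + ZtoR l from funext hl, g.periodization_add_ZtoR]

/-- The periodization of a Schwartz function, as a function on the torus. -/
def SchwartzMap.torusPeriodization (g : SchwartzMap (Fin n → ℝ) ℂ) :
    C(UnitAddTorus (Fin n), ℂ) :=
  (isQuotientMap_torusProj n).lift g.periodization g.periodization_factorsThrough

lemma SchwartzMap.torusPeriodization_coe (g : SchwartzMap (Fin n → ℝ) ℂ) (x : Fin n → ℝ) :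
    g.torusPeriodization (fun i => (x i : UnitAddCircle)) = ∑' k : Fin n → ℤ, g (x + ZtoR k) :=
  DFunLike.congr_fun ((isQuotientMap_torusProj n).lift_comp g.periodization
    g.periodization_factorsThrough) x

lemma hasSum_setIntegral_unitCube_comp_add_ZtoR {E : Type*} [NormedAddCommGroup E]
    [NormedSpace ℝ E] {h : (Fin n → ℝ) → E} (hh : Integrable h) :
    HasSum (fun k : Fin n → ℤ => ∫ x in {x : Fin n → ℝ | ∀ i, x i ∈ Ioc (0 : ℝ) (0 + 1)},
      h (x + ZtoR k)) (∫ x, h x) := by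
  let Q : (Fin n → ℤ) → Set (Fin n → ℝ) := fun k => {x | ∀ i, x i ∈ Ioc (k i : ℝ) (k i + 1)}
  have hmem : ∀ k x, x ∈ Q k ↔ ∀ i, ⌈x i⌉ = k i + 1 := fun k x =>
    forall_congr' fun i => by simp [Int.ceil_eq_iff]
  have hQ : ∀ k, MeasurableSet (Q k) := fun k =>
    MeasurableSet.univ_pi' fun i => measurableSet_Ioc
  have hdisj : Pairwise (Function.onFun Disjoint Q) := fun k l hkl =>
    Set.disjoint_left.mpr fun x hk hl => hkl <| funext fun i => by
      have h₁ := (hmem k x).mp hk i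
      have h₂ := (hmem l x).mp hl i
      omega
  have hunion : ⋃ k, Q k = univ := eq_univ_of_forall fun x =>
    mem_iUnion.mpr ⟨fun i => ⌈x i⌉ - 1, (hmem _ x).mpr fun i => by ring⟩
  have hsum := hasSum_integral_iUnion hQ hdisj hh.integrableOn
  rw [hunion, setIntegral_univ] at hsum
  refine hsum.congr_fun fun k => ?_
  rw [← (measurePreserving_add_right volume (ZtoR k)).setIntegral_preimage_emb
    (measurableEmbedding_addRight (ZtoR k)) h (Q k)]
  congr 2
  ext x
  simp [Q, ZtoR, add_comm _ (1 : ℝ)]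

lemma mFourier_coe (m : Fin n → ℤ) (x : Fin n → ℝ) :
    mFourier m (fun i => (x i : UnitAddCircle)) =
      Complex.exp (2 * π * Complex.I * ((∑ i, x i * m i : ℝ) : ℂ)) := by
  simp only [mFourier, ContinuousMap.coe_mk, fourier_coe_apply, ← Complex.exp_sum]
  push_cast
  rw [Finset.mul_sum]
  congr 1
  exact Finset.sum_congr rfl fun i _ => by ring

lemma mFourier_coe_add_ZtoR (m k : Fin n → ℤ) (x : Fin n → ℝ) :
    mFourier m (fun i => ((x + ZtoR k) i : UnitAddCircle)) =
      mFourier m (fun i => (x i : UnitAddCircle)) := by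
  congr 1
  ext i
  simp [ZtoR]

lemma SchwartzMap.mFourierCoeff_torusPeriodization (g : SchwartzMap (Fin n → ℝ) ℂ)
    (m : Fin n → ℤ) : mFourierCoeff g.torusPeriodization m =
      ∫ x : Fin n → ℝ, mFourier (-m) (fun i => (x i : UnitAddCircle)) * g x := by
  let e : (Fin n → ℝ) → ℂ := fun x => mFourier (-m) (fun i => (x i : UnitAddCircle))
  have he : Continuous e := (mFourier (-m)).continuous.comp (torusProj n).continuous
  have hnorm : ∀ x, ‖e x‖ = 1 := fun x => by
    simp only [e, mFourier_coe]
    rw [Complex.norm_exp]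
    simp
  have hint : Integrable fun x => e x * g x :=
    g.integrable.bdd_mul he.aestronglyMeasurable (.of_forall fun x => (hnorm x).le)
  have hsum := hasSum_setIntegral_unitCube_comp_add_ZtoR hint
  have hsum' := hasSum_setIntegral_unitCube_comp_add_ZtoR hint.norm
  have hswap := hasSum_integral_of_summable_integral_norm
    (F := fun (k : Fin n → ℤ) x => e (x + ZtoR k) * g (x + ZtoR k))
    (μ := volume.restrict {x : Fin n → ℝ | ∀ i, x i ∈ Ioc (0 : ℝ) (0 + 1)})
    (fun k => (hint.comp_add_right (ZtoR k)).integrableOn) hsum'.summable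
  rw [mFourierCoeff_eq_integral _ m 0]
  refine Eq.trans ?_ (hswap.unique hsum)
  refine integral_congr_ae (.of_forall fun x => ?_)
  simp only [g.torusPeriodization_coe, e, mFourier_coe_add_ZtoR, tsum_mul_left, smul_eq_mul]

lemma SchwartzMap.summable_mFourierCoeff_torusPeriodization (g : SchwartzMap (Fin n → ℝ) ℂ) :
    Summable (mFourierCoeff g.torusPeriodization) := by
  let eqv := EuclideanSpace.equiv (Fin n) ℝ
  let G : SchwartzMap (EuclideanSpace ℝ (Fin n)) ℂ :=
    SchwartzMap.compCLMOfContinuousLinearEquiv ℝ eqv g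
  let H : SchwartzMap (Fin n → ℝ) ℂ :=
    SchwartzMap.compCLMOfContinuousLinearEquiv ℝ eqv.symm (𝓕 G)
  refine H.summable_ZtoR.congr fun m => ?_
  rw [g.mFourierCoeff_torusPeriodization]
  change (𝓕 G) (eqv.symm (ZtoR m)) = _
  rw [SchwartzMap.fourier_coe, Real.fourier_eq',
    ← (PiLp.volume_preserving_toLp (Fin n)).integral_comp
      (MeasurableEquiv.toLp 2 (Fin n → ℝ)).measurableEmbedding]
  refine integral_congr_ae (.of_forall fun x => ?_)
  simp only [mFourier_coe, smul_eq_mul]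
  have hinner : inner ℝ (WithLp.toLp 2 x) (eqv.symm (ZtoR m)) = ∑ i, x i * m i := by
    simp [eqv, PiLp.inner_apply, ZtoR, mul_comm]
  have hneg : ∑ i, x i * ((-m) i : ℤ) = -∑ i, x i * m i := by simp
  rw [hinner, hneg]
  change _ * g x = _
  congr 2
  push_cast
  ring

/-- **Poisson summation** on `ℤⁿ` for Schwartz functions. -/
theorem SchwartzMap.tsum_integral_mul_exp_eq_tsum_ZtoR (g : SchwartzMap (Fin n → ℝ) ℂ) :
    ∑' k : Fin n → ℤ, ∫ x : Fin n → ℝ,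
        g x * Complex.exp (2 * π * Complex.I * ((∑ j, x j * k j : ℝ) : ℂ)) =
      ∑' k : Fin n → ℤ, g (ZtoR k) := by
  have h := (hasSum_mFourier_series_apply_of_summable
    g.summable_mFourierCoeff_torusPeriodization
    (fun i => ((0 : Fin n → ℝ) i : UnitAddCircle))).tsum_eq
  rw [g.torusPeriodization_coe] at h
  simp only [zero_add] at h
  rw [← h, ← (Equiv.neg (Fin n → ℤ)).tsum_eq]
  refine tsum_congr fun k => ?_
  simp only [Equiv.neg_apply, mFourier_coe, g.mFourierCoeff_torusPeriodization, mul_comm (g _)]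
  simp

lemma Fhat_sqrt_two_pi_smul_ZtoR (f : SchwartzMap (Fin n → ℝ) ℂ) (k : Fin n → ℤ) :
    Fhat n f (Real.sqrt (2 * π) • ZtoR k) =
      ∫ x : Fin n → ℝ, f (Real.sqrt (2 * π) • x) *
        Complex.exp (2 * π * Complex.I * ((∑ j, x j * k j : ℝ) : ℂ)) := by
  have hsq : Real.sqrt (2 * π) * Real.sqrt (2 * π) = 2 * π := Real.mul_self_sqrt (by positivity)
  have hconst : |(Real.sqrt (2 * π) ^ n)⁻¹| = (2 * π) ^ (-(n : ℝ) / 2) := by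
    rw [abs_of_nonneg (by positivity), Real.sqrt_eq_rpow, ← Real.rpow_natCast,
      ← Real.rpow_mul (by positivity), ← Real.rpow_neg (by positivity)]
    ring_nf
  have h := Measure.integral_comp_smul volume (fun x : Fin n → ℝ => f x *
    Complex.exp (Complex.I * ((∑ j, x j * (Real.sqrt (2 * π) • ZtoR k) j : ℝ) : ℂ)))
    (Real.sqrt (2 * π))
  rw [Module.finrank_fin_fun, hconst, Complex.real_smul] at h
  rw [Fhat, ← h]
  refine integral_congr_ae (.of_forall fun x => ?_)
  have hsum : ∑ j, (Real.sqrt (2 * π) • x) j * (Real.sqrt (2 * π) • ZtoR k) j =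
      2 * π * ∑ j, x j * k j := by
    rw [← hsq, Finset.mul_sum]
    exact Finset.sum_congr rfl fun j _ => by simp [ZtoR]; ring
  simp only [hsum]
  push_cast
  ring_nf

end LatticeSums

lemma Matrix.even_vecMul_self_of_even_diag {n : ℕ} {B : Matrix (Fin n) (Fin n) ℤ}
    (hB : B.transpose = B) (hdiag : ∀ i, (2 : ℤ) ∣ B i i) (k : Fin n → ℤ) :
    Even (∑ j, Matrix.vecMul k B j * k j) := by
  rw [even_iff_two_dvd]
  apply (ZMod.intCast_zmod_eq_zero_iff_dvd _ 2).mp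
  simp only [Matrix.vecMul, dotProduct, Finset.sum_mul]
  push_cast
  rw [← Fintype.sum_prod_type' fun j i => (k i : ZMod 2) * (B i j : ZMod 2) * (k j : ZMod 2)]
  refine Finset.sum_involution (fun p _ => p.swap) (fun p _ => ?_) (fun p _ hp hswap => hp ?_)
    (fun p _ => by simp) (fun p _ => by simp)
  · have hsymm : B p.1 p.2 = B p.2 p.1 := by conv_lhs => rw [← hB, Matrix.transpose_apply]
    simp only [Prod.fst_swap, Prod.snd_swap, hsymm]
    rw [mul_comm, ← mul_assoc, mul_right_comm, mul_comm (k p.1 : ZMod 2)]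
    exact CharTwo.add_self_eq_zero _
  · have hp12 : p.2 = p.1 := congrArg Prod.fst hswap
    have hzero : ((B p.1 p.1 : ℤ) : ZMod 2) = 0 :=
      (ZMod.intCast_zmod_eq_zero_iff_dvd _ 2).mpr (hdiag _)
    simp [hp12, hzero]

/-- The Dirac comb `Δ = Σ_{k∈ℤⁿ} δ_{√(2π)k}` is fixed by the Weil-representation
operators attached to the generators of `Γ_{1,2}`: the Fourier transform, chirps
`e^{πi⟨kB,k⟩}` with `B` symmetric integral with even diagonal, and changes of
variable by `A ∈ GL(n,ℤ)`. -/
theorem dirac_comb_fixed_by_gamma12_generators (n : ℕ) (hn : 1 ≤ n)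
    (f : SchwartzMap (Fin n → ℝ) ℂ) :
    (∑' k : Fin n → ℤ, Fhat n f (Real.sqrt (2 * π) • ZtoR k)) =
      (∑' k : Fin n → ℤ, f (Real.sqrt (2 * π) • ZtoR k)) ∧
    (∀ B : Matrix (Fin n) (Fin n) ℤ, Matrix.transpose B = B →
      (∀ i, (2 : ℤ) ∣ B i i) →
      (∑' k : Fin n → ℤ,
          Complex.exp ((Real.pi : ℂ) * Complex.I *
              ((∑ j, Matrix.vecMul k B j * k j : ℤ) : ℂ)) *
            f (Real.sqrt (2 * π) • ZtoR k)) =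
        ∑' k : Fin n → ℤ, f (Real.sqrt (2 * π) • ZtoR k)) ∧
    (∀ A A' : Matrix (Fin n) (Fin n) ℤ, A * A' = 1 → A' * A = 1 →
      (∑' k : Fin n → ℤ, f (Real.sqrt (2 * π) • ZtoR (Matrix.vecMul k A))) =
        ∑' k : Fin n → ℤ, f (Real.sqrt (2 * π) • ZtoR k)) := by
  refine ⟨?_, fun B hB hdiag => ?_, fun A A' hright hleft => ?_⟩
  · let dil : (Fin n → ℝ) ≃L[ℝ] (Fin n → ℝ) := ContinuousLinearEquiv.smulLeft
      (Units.mk0 (Real.sqrt (2 * π)) (by positivity))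
    let g : SchwartzMap (Fin n → ℝ) ℂ := SchwartzMap.compCLMOfContinuousLinearEquiv ℝ dil f
    simp only [Fhat_sqrt_two_pi_smul_ZtoR]
    exact g.tsum_integral_mul_exp_eq_tsum_ZtoR
  · refine tsum_congr fun k => ?_
    obtain ⟨m, hm⟩ := Matrix.even_vecMul_self_of_even_diag hB hdiag k
    rw [hm, show (π : ℂ) * Complex.I * ((m + m : ℤ) : ℂ) = m * (2 * π * Complex.I) by
      push_cast; ring, Complex.exp_int_mul_two_pi_mul_I, one_mul]
  · let e : (Fin n → ℤ) ≃ (Fin n → ℤ) :=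
      { toFun := fun k => Matrix.vecMul k A
        invFun := fun k => Matrix.vecMul k A'
        left_inv := fun k => by simp [Matrix.vecMul_vecMul, hright]
        right_inv := fun k => by simp [Matrix.vecMul_vecMul, hleft] }
    exact e.tsum_eq fun k => f (Real.sqrt (2 * π) • ZtoR k)
end
end

section
/- Let n ≥ 1, N ≥ 1, and let c : ℚⁿ → ℂ be supported in the lattice N⁻¹ℤⁿ and Nℤⁿ-periodic (c(x + k) = c(x) for all x ∈ ℚⁿ, k ∈ Nℤⁿ). Then for every Schwartz function f on ℝⁿ: (i) for every symmetric integer n×n matrix β, Σ_{ξ∈N⁻¹ℤⁿ} c(ξ) e^{2πiN²⟨ξβ,ξ⟩} f(√(2π)·ξ) = Σ_{ξ∈N⁻¹ℤⁿ} c(ξ) f(√(2π)·ξ); (ii) for every integer n×n matrix α such that A = 1 + 2N²α is invertible over ℤ, Σ_{ξ∈N⁻¹ℤⁿ} c(ξ) f(√(2π)·ξA) = Σ_{ξ∈N⁻¹ℤⁿ} c(ξ) f(√(2π)·ξ). That is, the Weil-representation operators attached to the generators of the subgroup U_{2N²} fix every Poisson distribution supported on √(2π)·N⁻¹ℤⁿ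 with Nℤⁿ-periodic coefficients. -/
noncomputable section

open scoped BigOperators Real

/-- The inclusion `ℚⁿ ⊆ ℝⁿ`. -/
def QtoR {n : ℕ} (x : Fin n → ℚ) : Fin n → ℝ := fun j => (x j : ℝ)

/-- The lattice `N⁻¹ℤⁿ ⊆ ℚⁿ`. -/
def invNLattice (n N : ℕ) : Set (Fin n → ℚ) :=
  {x | ∀ j, ∃ m : ℤ, x j = (m : ℚ) / (N : ℚ)}

/-- Points of `N⁻¹ℤⁿ` are given by an integral vector of numerators. -/
theorem exists_numerator_of_mem_invNLattice {n N : ℕ} (hN : (N : ℚ) ≠ 0) {x : Fin n → ℚ}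
    (hx : x ∈ invNLattice n N) : ∃ m : Fin n → ℤ, (N : ℚ) • x = fun j => (m j : ℚ) := by
  choose m hm using hx
  refine ⟨m, funext fun j => ?_⟩
  rw [Pi.smul_apply, hm j, smul_eq_mul, mul_div_cancel₀ _ hN]

theorem mem_invNLattice_of_smul_eq {n N : ℕ} (hN : (N : ℚ) ≠ 0) {x : Fin n → ℚ} {m : Fin n → ℤ}
    (h : (N : ℚ) • x = fun j => (m j : ℚ)) : x ∈ invNLattice n N := fun j =>
  ⟨m j, by rw [eq_div_iff hN, mul_comm]; exact congrFun h j⟩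

theorem vecMul_intCast {n : ℕ} (m : Fin n → ℤ) (M : Matrix (Fin n) (Fin n) ℤ) :
    Matrix.vecMul (fun j => (m j : ℚ)) (M.map fun z : ℤ => (z : ℚ)) =
      fun j => ((Matrix.vecMul m M j : ℤ) : ℚ) :=
  funext fun j => ((Int.castRingHom ℚ).map_vecMul M m j).symm

theorem vecMul_mem_invNLattice {n N : ℕ} (hN : (N : ℚ) ≠ 0) (M : Matrix (Fin n) (Fin n) ℤ)
    {x : Fin n → ℚ} (hx : x ∈ invNLattice n N) :
    Matrix.vecMul x (M.map fun z : ℤ => (z : ℚ)) ∈ invNLattice n N := by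
  obtain ⟨m, hm⟩ := exists_numerator_of_mem_invNLattice hN hx
  refine mem_invNLattice_of_smul_eq hN (m := Matrix.vecMul m M) ?_
  rw [← Matrix.smul_vecMul, hm, vecMul_intCast]

theorem vecMul_vecMul_of_mul_eq_one {n : ℕ} {A B : Matrix (Fin n) (Fin n) ℤ} (h : A * B = 1)
    (x : Fin n → ℚ) :
    Matrix.vecMul (Matrix.vecMul x (A.map fun z : ℤ => (z : ℚ))) (B.map fun z : ℤ => (z : ℚ)) =
      x := by
  have hmap : (A.map fun z : ℤ => (z : ℚ)) * (B.map fun z : ℤ => (z : ℚ)) = 1 := by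
    simpa [h] using (Matrix.map_mul (L := A) (M := B) (f := Int.castRingHom ℚ)).symm
  rw [Matrix.vecMul_vecMul, hmap, Matrix.vecMul_one]

/-- An integral matrix invertible over `ℤ` permutes `N⁻¹ℤⁿ`. -/
def invNLatticeEquiv {n N : ℕ} (hN : (N : ℚ) ≠ 0) {A B : Matrix (Fin n) (Fin n) ℤ}
    (hAB : A * B = 1) (hBA : B * A = 1) : invNLattice n N ≃ invNLattice n N where
  toFun ξ := ⟨_, vecMul_mem_invNLattice hN A ξ.2⟩
  invFun ξ := ⟨_, vecMul_mem_invNLattice hN B ξ.2⟩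
  left_inv ξ := Subtype.ext (vecMul_vecMul_of_mul_eq_one hAB ξ.1)
  right_inv ξ := Subtype.ext (vecMul_vecMul_of_mul_eq_one hBA ξ.1)

/-- The quadratic form `N²⟨ξβ,ξ⟩` is integral on `N⁻¹ℤⁿ`. -/
theorem exists_int_eq_sq_mul_form {n N : ℕ} (hN : (N : ℚ) ≠ 0) (β : Matrix (Fin n) (Fin n) ℤ)
    {x : Fin n → ℚ} (hx : x ∈ invNLattice n N) :
    ∃ z : ℤ, (N : ℚ) ^ 2 * ∑ j, Matrix.vecMul x (β.map fun z : ℤ => (z : ℚ)) j * x j = z := by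
  obtain ⟨m, hm⟩ := exists_numerator_of_mem_invNLattice hN hx
  refine ⟨∑ j, Matrix.vecMul m β j * m j, ?_⟩
  have hv : (N : ℚ) • Matrix.vecMul x (β.map fun z : ℤ => (z : ℚ)) =
      fun j => ((Matrix.vecMul m β j : ℤ) : ℚ) := by
    rw [← Matrix.smul_vecMul, hm, vecMul_intCast]
  rw [Finset.mul_sum, Int.cast_sum]
  refine Finset.sum_congr rfl fun j _ => ?_
  rw [Int.cast_mul, ← congrFun hv j, ← congrFun hm j, Pi.smul_apply, Pi.smul_apply,
    smul_eq_mul, smul_eq_mul]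
  ring

/-- On `N⁻¹ℤⁿ`, multiplication by `1 + 2N²α` is the identity modulo `Nℤⁿ`. -/
theorem exists_vecMul_one_add_eq {n N : ℕ} (hN : (N : ℚ) ≠ 0) (α : Matrix (Fin n) (Fin n) ℤ)
    {x : Fin n → ℚ} (hx : x ∈ invNLattice n N) :
    ∃ k : Fin n → ℤ,
      Matrix.vecMul x ((1 + ((2 * N ^ 2 : ℕ) : ℤ) • α).map fun z : ℤ => (z : ℚ)) =
        x + fun j => (N : ℚ) * (k j : ℚ) := by
  obtain ⟨m, hm⟩ := exists_numerator_of_mem_invNLattice hN hx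
  refine ⟨fun j => 2 * Matrix.vecMul m α j, ?_⟩
  have hA : ((1 + ((2 * N ^ 2 : ℕ) : ℤ) • α).map fun z : ℤ => (z : ℚ)) =
      1 + (2 * (N : ℚ) ^ 2) • α.map fun z : ℤ => (z : ℚ) := by
    ext i j
    rw [Matrix.map_apply, Matrix.add_apply, Matrix.add_apply, Matrix.smul_apply, Matrix.smul_apply,
      Matrix.map_apply, smul_eq_mul, smul_eq_mul, Matrix.one_apply, Matrix.one_apply]
    push_cast
    rfl
  have hv : (N : ℚ) • Matrix.vecMul x (α.map fun z : ℤ => (z : ℚ)) =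
      fun j => ((Matrix.vecMul m α j : ℤ) : ℚ) := by
    rw [← Matrix.smul_vecMul, hm, vecMul_intCast]
  rw [hA, Matrix.vecMul_add, Matrix.vecMul_one, Matrix.vecMul_smul]
  refine congrArg (x + ·) (funext fun j => ?_)
  rw [Int.cast_mul, ← congrFun hv j, Pi.smul_apply, Pi.smul_apply, smul_eq_mul, smul_eq_mul]
  push_cast
  ring

/-- The Weil-representation operators attached to the generators of `U_{2N²}` fix
every Poisson distribution supported on `√(2π)·N⁻¹ℤⁿ` with `Nℤⁿ`-periodic
coefficients: (i) chirps `e^{2πiN²⟨ξβ,ξ⟩}` with `β` symmetric integral, and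
(ii) changes of variable by `A = 1 + 2N²α ∈ GL(n,ℤ)`. -/
theorem U2N2_generators_fix_poisson (n N : ℕ) (hn : 1 ≤ n) (hN : 1 ≤ N)
    (c : (Fin n → ℚ) → ℂ)
    (hsupp : ∀ x, x ∉ invNLattice n N → c x = 0)
    (hper : ∀ (x : Fin n → ℚ) (k : Fin n → ℤ),
      c (x + fun j => (N : ℚ) * (k j : ℚ)) = c x)
    (f : SchwartzMap (Fin n → ℝ) ℂ) :
    (∀ β : Matrix (Fin n) (Fin n) ℤ, Matrix.transpose β = β →
      (∑' ξ : invNLattice n N,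
          c ξ * Complex.exp (2 * (Real.pi : ℂ) * Complex.I *
              (((N : ℚ) ^ 2 * ∑ j,
                Matrix.vecMul (ξ : Fin n → ℚ)
                  (Matrix.map β (fun z : ℤ => (z : ℚ))) j * (ξ : Fin n → ℚ) j : ℚ) : ℂ)) *
            f (Real.sqrt (2 * π) • QtoR (ξ : Fin n → ℚ))) =
        ∑' ξ : invNLattice n N,
          c ξ * f (Real.sqrt (2 * π) • QtoR (ξ : Fin n → ℚ))) ∧
    (∀ α A' : Matrix (Fin n) (Fin n) ℤ,
      (1 + ((2 * N ^ 2 : ℕ) : ℤ) • α) * A' = 1 →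
      A' * (1 + ((2 * N ^ 2 : ℕ) : ℤ) • α) = 1 →
      (∑' ξ : invNLattice n N,
          c ξ * f (Real.sqrt (2 * π) • QtoR
            (Matrix.vecMul (ξ : Fin n → ℚ)
              (Matrix.map (1 + ((2 * N ^ 2 : ℕ) : ℤ) • α) (fun z : ℤ => (z : ℚ)))))) =
        ∑' ξ : invNLattice n N,
          c ξ * f (Real.sqrt (2 * π) • QtoR (ξ : Fin n → ℚ))) := by
  have hN' : (N : ℚ) ≠ 0 := Nat.cast_ne_zero.mpr (Nat.one_le_iff_ne_zero.mp hN)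
  refine ⟨fun β _ => tsum_congr fun ξ => ?_, fun α A' h₁ h₂ => ?_⟩
  · obtain ⟨z, hz⟩ := exists_int_eq_sq_mul_form hN' β ξ.2
    rw [hz, Rat.cast_intCast, mul_comm _ (z : ℂ), Complex.exp_int_mul_two_pi_mul_I, mul_one]
  · refine Eq.trans (tsum_congr fun ξ => ?_) ((invNLatticeEquiv hN' h₁ h₂).tsum_eq
      fun ξ => c ξ * f (Real.sqrt (2 * π) • QtoR (ξ : Fin n → ℚ)))
    obtain ⟨k, hk⟩ := exists_vecMul_one_add_eq hN' α ξ.2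
    have hc : c (invNLatticeEquiv hN' h₁ h₂ ξ) = c ξ := (congrArg c hk).trans (hper ξ k)
    rw [hc]
    rfl
end
end
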